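/- arXiv:1308.3144 — 4 statements merged into one kernel-verified Lean document; each statement's English description precedes it below -/
import Mathlib

section
/- Fix a constant 0 < ε < 1/10. Let (T_k)_{k≥1} be a sequence of finite rooted forests, write n_k = |T_k| for the number of vertices of T_k, and call a vertex v of T_k poor if |D(v)| < εk and rich otherwise. Suppose that (the number of poor vertices of T_k)/n_k → 0 as k → ∞. Then for every constant C > 0, (the number of vertices of T_k of height less than Ck)/n_k → 0 as k → ∞; that is, all but o(n_k) vertices of T_k are at height at least Ck. -/
open Filter

/-- Iterated parent map of a rooted forest: `parIter par n v` is the vertex reached from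
`v` by `n` applications of the parent map `par` (or `none` if a root is passed). -/
def parIter {V : Type*} (par : V → Option V) : ℕ → V → Option V
  | 0, v => some v
  | n + 1, v => (parIter par n v).bind par

/-- A parent map defines a rooted forest if iterating it from any vertex eventually
reaches a root. -/
def IsRootedForest {V : Type*} (par : V → Option V) : Prop :=
  ∀ v : V, ∃ n : ℕ, parIter par n v = none

/-- `u` is an ancestor of `v`. -/
def IsAnc {V : Type*} (par : V → Option V) (u v : V) : Prop :=
  ∃ n : ℕ, 0 < n ∧ parIter par n v = some u

/-- The set `D(v)` of descendants of `v`. -/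
def Desc {V : Type*} (par : V → Option V) (v : V) : Set V :=
  {w | IsAnc par v w}

theorem parIter_add' {V : Type*} (par : V → Option V) (a b : ℕ) (w u : V)
    (h : parIter par a w = some u) : parIter par (a + b) w = parIter par b u := by
  induction b with
  | zero => simpa [parIter] using h
  | succ b ih => rw [← add_assoc]; simp only [parIter, ih]

theorem low_bound {V : Type*} [Fintype V] (par : V → Option V) (t : ℝ) (N : ℕ) :
    ∃ m : ℕ, (m : ℝ) * t ≤ ({v : V | ((Desc par v).ncard : ℝ) < t}.ncard : ℝ) ∧
      {v : V | ∀ (n : ℕ) (w : V), N ≤ n → parIter par n w ≠ some v}.ncard ≤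
        {v : V | ((Desc par v).ncard : ℝ) < t}.ncard + N * m := by
  classical
  set P : Set V := {v : V | ((Desc par v).ncard : ℝ) < t} with hP
  set L : Set V := {v : V | ∀ (n : ℕ) (w : V), N ≤ n → parIter par n w ≠ some v} with hL
  set M : Finset V := Finset.univ.filter (fun v => v ∉ P ∧ Desc par v ⊆ P) with hM
  refine ⟨M.card, ?_, ?_⟩
  · have hdis : ∀ u ∈ M, ∀ u' ∈ M, u ≠ u' →
        Disjoint (Desc par u).toFinset (Desc par u').toFinset := by
      have key : ∀ u ∈ M, ∀ u' ∈ M, ∀ w a b, a < b → parIter par a w = some u →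
          parIter par b w = some u' → False := by
        intro u hu u' hu' w a b hab ha hb
        simp only [hM, Finset.mem_filter, Finset.mem_univ, true_and] at hu hu'
        apply hu.1
        apply hu'.2
        refine ⟨b - a, by omega, ?_⟩
        rw [← parIter_add' par a (b - a) w u ha, ← hb]
        congr 1
        omega
      intro u hu u' hu' hne
      rw [Finset.disjoint_left]
      intro w hw hw'
      rw [Set.mem_toFinset] at hw hw'
      obtain ⟨a, -, ha⟩ := hw
      obtain ⟨b, -, hb⟩ := hw'
      rcases lt_trichotomy a b with h | h | h
      · exact key u hu u' hu' w a b h ha hb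
      · subst h
        rw [ha] at hb
        exact hne (Option.some.inj hb)
      · exact key u' hu' u hu w b a h hb ha
    have h1 : ((M.biUnion fun u => (Desc par u).toFinset).card) ≤ P.ncard := by
      rw [Set.ncard_eq_toFinset_card']
      apply Finset.card_le_card
      intro w hw
      simp only [Finset.mem_biUnion, Set.mem_toFinset] at hw ⊢
      obtain ⟨u, hu, hw⟩ := hw
      exact (Finset.mem_filter.1 hu).2.2 hw
    rw [Finset.card_biUnion hdis] at h1
    have h2 : (M.card : ℝ) * t ≤ ∑ u ∈ M, ((Desc par u).toFinset.card : ℝ) := by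
      rw [← nsmul_eq_mul]
      apply Finset.card_nsmul_le_sum
      intro u hu
      have := (Finset.mem_filter.1 hu).2.1
      simp only [hP, Set.mem_setOf_eq, not_lt] at this
      rwa [Set.ncard_eq_toFinset_card'] at this
    refine h2.trans ?_
    exact_mod_cast h1
  · have hsub : L.toFinset ⊆ P.toFinset ∪ (L \ P).toFinset := by
      intro v hv
      rw [Finset.mem_union, Set.mem_toFinset, Set.mem_toFinset]
      rw [Set.mem_toFinset] at hv
      by_cases h : v ∈ P
      · exact Or.inl h
      · exact Or.inr ⟨hv, h⟩
    have h3 : ((L \ P).toFinset.image some) ⊆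
        (Finset.range N ×ˢ M).image (fun q => parIter par q.1 q.2) := by
      intro o ho
      obtain ⟨v, hv, rfl⟩ := Finset.mem_image.1 ho
      rw [Set.mem_toFinset] at hv
      obtain ⟨hvL, hvP⟩ := hv
      have hlt : ∀ n w, parIter par n w = some v → n < N := by
        intro n w h
        by_contra hn
        exact hvL n w (by omega) h
      let Q : ℕ → Prop := fun n => ∃ w, w ∉ P ∧ parIter par n w = some v
      have hQ0 : Q 0 := ⟨v, hvP, rfl⟩
      obtain ⟨w, hwP, hw⟩ : Q (Nat.findGreatest Q N) :=
        Nat.findGreatest_spec (P := Q) (Nat.zero_le N) hQ0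
      refine Finset.mem_image.2 ⟨(Nat.findGreatest Q N, w), ?_, hw⟩
      refine Finset.mem_product.2 ⟨Finset.mem_range.2 (hlt _ _ hw), ?_⟩
      refine Finset.mem_filter.2 ⟨Finset.mem_univ _, hwP, ?_⟩
      rintro x ⟨a, ha, hx⟩
      by_contra hxP
      have h5 := parIter_add' par a (Nat.findGreatest Q N) x w hx
      rw [hw] at h5
      have h6 := Nat.le_findGreatest (P := Q) (hlt _ _ h5).le ⟨x, hxP, h5⟩
      omega
    have h4 := (Finset.card_le_card h3).trans Finset.card_image_le
    rw [Finset.card_image_of_injective _ (Option.some_injective V), Finset.card_product,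
      Finset.card_range] at h4
    have h7 := (Finset.card_le_card hsub).trans (Finset.card_union_le _ _)
    rw [Set.ncard_eq_toFinset_card' L, Set.ncard_eq_toFinset_card' P]
    omega

/-- **Lemma 5 of the paper.**  Fix `0 < ε < 1/10`.  Let `(T_k)` be a sequence of finite
rooted forests with `n_k` vertices, and call a vertex `v` *poor* if `|D(v)| < εk`.  If the
number of poor vertices is `o(n_k)`, then for every constant `C > 0` all but `o(n_k)`
vertices are at height at least `Ck`; i.e. the proportion of vertices of height `< Ck`
(no descendant at distance at least `Ck`) tends to `0`. -/
theorem few_low_vertices (ε : ℝ) (hε0 : 0 < ε) (hε : ε < 1 / 10)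
    (V : ℕ → Type) [∀ k, Fintype (V k)]
    (par : ∀ k, V k → Option (V k))
    (hforest : ∀ k, IsRootedForest (par k))
    (hpoor : Tendsto (fun k =>
        ({v : V k | ((Desc (par k) v).ncard : ℝ) < ε * k}.ncard : ℝ) / Fintype.card (V k))
      atTop (nhds 0))
    (C : ℝ) (hC : 0 < C) :
    Tendsto (fun k =>
        ({v : V k | ∀ (n : ℕ) (w : V k), C * k ≤ (n : ℝ) →
            parIter (par k) n w ≠ some v}.ncard : ℝ) / Fintype.card (V k))
      atTop (nhds 0) := by
  have hlim := hpoor.const_mul (1 + (C + 1) / ε)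
  rw [mul_zero] at hlim
  refine tendsto_of_tendsto_of_tendsto_of_le_of_le' tendsto_const_nhds hlim
    (Eventually.of_forall fun k => by positivity) ?_
  filter_upwards [eventually_ge_atTop 1] with k hk
  rw [← mul_div_assoc]
  apply div_le_div_of_nonneg_right _ (Nat.cast_nonneg _)
  obtain ⟨m, h1, h2⟩ := low_bound (par k) (ε * k) ⌈C * k⌉₊
  simp only [Nat.ceil_le] at h2
  have hk' : (1 : ℝ) ≤ k := by exact_mod_cast hk
  have hN : (⌈C * k⌉₊ : ℝ) ≤ (C + 1) * k := by
    have := (Nat.ceil_lt_add_one (by positivity : 0 ≤ C * (k : ℝ))).le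
    linarith
  have h3 : (⌈C * k⌉₊ : ℝ) * m ≤ (C + 1) / ε * (m * (ε * k)) := by
    have : (C + 1) / ε * (m * (ε * k)) = (C + 1) * k * m := by field_simp
    rw [this]
    gcongr
  have h4 := mul_le_mul_of_nonneg_left h1 (by positivity : 0 ≤ (C + 1) / ε)
  have h5 := (Nat.cast_le (α := ℝ)).2 h2
  push_cast at h5
  linarith
end

section
/- Fix a constant 0 < ε < 1/10. Let (T_k)_{k≥1} be a sequence of finite rooted forests, write n_k = |T_k|, call a vertex v of T_k poor if |D(v)| < εk, and call v heavy if |D_{≤(1−5ε)k}(v)| > (1−4ε)k. Suppose that (the number of poor vertices of T_k)/n_k → 0 as k → ∞. Then (the number of heavy vertices of T_k)/n_k → 0 as k → ∞. -/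
open Filter

/-- The set `D_{≤r}(v)` of descendants of `v` at distance at most `r`. -/
def DescLe {V : Type*} (par : V → Option V) (v : V) (r : ℝ) : Set V :=
  {w | ∃ n : ℕ, 0 < n ∧ (n : ℝ) ≤ r ∧ parIter par n w = some v}

open Classical in
theorem parIter_add'_s8 {V : Type*} (p : V → Option V) (m n : ℕ) (v : V) :
    parIter p (m + n) v = (parIter p m v).bind (parIter p n) := by
  induction n with
  | zero =>
    cases h : parIter p m v <;> simp [h, parIter]
  | succ n ih =>
    rw [← Nat.add_assoc]
    simp only [parIter, ih]
    cases h : parIter p m v <;> simp [parIter]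

theorem parIter_trans {V : Type*} {p : V → Option V} {m n : ℕ} {u v w : V}
    (h1 : parIter p m u = some v) (h2 : parIter p n v = some w) :
    parIter p (m + n) u = some w := by
  rw [parIter_add'_s8, h1]; simpa using h2

theorem parIter_split {V : Type*} {p : V → Option V} {m n : ℕ} {u v w : V}
    (h1 : parIter p m u = some v) (h2 : parIter p (m + n) u = some w) :
    parIter p n v = some w := by
  rw [parIter_add'_s8, h1] at h2; simpa using h2

theorem parIter_mid {V : Type*} {p : V → Option V} {m n : ℕ} {u w : V}
    (h2 : parIter p (m + n) u = some w) : ∃ v, parIter p m u = some v ∧ parIter p n v = some w := by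
  rw [parIter_add'_s8] at h2; exact Option.bind_eq_some_iff.1 h2

theorem parIter_acyc {V : Type*} {p : V → Option V} (hf : IsRootedForest p) {n : ℕ} {v : V}
    (hn : 0 < n) : parIter p n v ≠ some v := by
  intro h
  obtain ⟨m, hm⟩ := hf v
  have h1 : ∀ j, parIter p (j * n) v = some v := by
    intro j
    induction j with
    | zero => simp [parIter]
    | succ j ih => rw [Nat.succ_mul]; exact parIter_trans ih h
  have h2 := h1 m
  obtain ⟨d, hd⟩ : ∃ d, m * n = m + d := Nat.exists_eq_add_of_le (Nat.le_mul_of_pos_right m hn)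
  rw [hd, parIter_add'_s8, hm] at h2
  simp at h2

theorem desc_subset {V : Type*} {p : V → Option V} {v w : V} (h : w ∈ Desc p v) :
    Desc p w ⊆ Desc p v := by
  obtain ⟨n, hn, h⟩ := h
  rintro x ⟨m, hm, hx⟩
  exact ⟨m + n, by omega, parIter_trans hx h⟩

/-- many vertices in bounded range if there is a vertex at distance R -/
theorem descLe_large {V : Type*} [Fintype V] {p : V → Option V} (hf : IsRootedForest p) {R : ℕ}
    {r : ℝ} (hR : (R : ℝ) ≤ r) {v w : V} (h : parIter p R w = some v) :
    R ≤ (DescLe p v r).ncard := by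
  have key : ∀ i : Fin R, ∃ x, parIter p i w = some x ∧ parIter p (R - i) x = some v := by
    intro i
    apply parIter_mid
    rw [Nat.add_sub_cancel' i.2.le]; exact h
  choose f hf1 hf2 using key
  have inj : Function.Injective f := by
    have aux : ∀ i j : Fin R, i < j → f i ≠ f j := by
      intro i j hij he
      have h1 := hf1 i
      have h2 := hf1 j
      rw [← he] at h2
      obtain ⟨d, hd⟩ := Nat.exists_eq_add_of_lt (show (i : ℕ) < j from hij)
      rw [hd, Nat.add_assoc] at h2
      exact parIter_acyc hf (Nat.succ_pos d) (parIter_split h1 h2)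
    intro i j he
    by_contra hne
    rcases lt_or_gt_of_ne hne with h | h
    · exact aux i j h he
    · exact aux j i h he.symm
  have hs : Set.range f ⊆ DescLe p v r := by
    rintro _ ⟨i, rfl⟩
    refine ⟨R - i, by omega, ?_, hf2 i⟩
    exact le_trans (by exact_mod_cast Nat.sub_le _ _) hR
  calc R = (Set.range f).ncard := by
        rw [← Set.image_univ, Set.ncard_image_of_injective _ inj]; simp
    _ ≤ _ := Set.ncard_le_ncard hs (Set.toFinite _)

/-- double counting -/
theorem sum_ncard_le {V : Type*} [Fintype V] (A B : Finset V) (rel : V → Set V) (R : ℕ)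
    (hA : ∀ v ∈ A, rel v ⊆ B)
    (h : ∀ w ∈ B, {v | v ∈ A ∧ w ∈ rel v}.ncard ≤ R) :
    ∑ v ∈ A, (rel v).ncard ≤ B.card * R := by
  classical
  have h1 : ∀ v ∈ A, (rel v).ncard = (Finset.bipartiteAbove (fun v w => w ∈ rel v) B v).card := by
    intro v hv
    rw [← Set.ncard_coe_finset]
    congr 1
    ext w
    simp only [Finset.bipartiteAbove, Finset.coe_filter, Set.mem_setOf_eq]
    exact ⟨fun hw => ⟨hA v hv hw, hw⟩, fun hw => hw.2⟩
  rw [Finset.sum_congr rfl h1, Finset.sum_card_bipartiteAbove_eq_sum_card_bipartiteBelow]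
  refine (Finset.sum_le_card_nsmul _ _ R ?_).trans (by simp)
  intro w hw
  refine le_trans (le_of_eq ?_) (h w hw)
  rw [← Set.ncard_coe_finset]
  congr 1
  ext v
  simp [Finset.bipartiteBelow]

theorem sum_descLe {V : Type*} [Fintype V] (p : V → Option V) {r : ℝ} (hr : 0 ≤ r) :
    ∑ v, (DescLe p v r).ncard ≤ Fintype.card V * ⌊r⌋₊ := by
  classical
  refine sum_ncard_le Finset.univ Finset.univ (fun v => DescLe p v r) _ (by simp) ?_
  intro w _
  have hsub : some '' {v | v ∈ (Finset.univ : Finset V) ∧ w ∈ DescLe p v r} ⊆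
      ((Finset.Icc 1 ⌊r⌋₊).image (fun n => parIter p n w) : Finset (Option V)) := by
    rintro _ ⟨v, ⟨_, n, hn, hnr, h⟩, rfl⟩
    simp only [Finset.coe_image, Set.mem_image, Finset.coe_Icc, Set.mem_Icc]
    exact ⟨n, ⟨hn, Nat.le_floor hnr⟩, h⟩
  rw [← Set.ncard_image_of_injective _ (Option.some_injective V)]
  refine (Set.ncard_le_ncard hsub (Finset.finite_toSet _)).trans ?_
  rw [Set.ncard_coe_finset]
  exact Finset.card_image_le.trans (by simp)

theorem heavy_bound {V : Type*} [Fintype V] {p : V → Option V} (hf : IsRootedForest p)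
    {ε : ℝ} (hε0 : 0 < ε) (hε : ε < 1 / 10) {k : ℕ} (hk : 0 < k) :
    ({v : V | (1 - 4 * ε) * k < ((DescLe p v ((1 - 5 * ε) * k)).ncard : ℝ)}.ncard : ℝ) ≤
      ((1 + ε) / ε ^ 2) * ({v : V | ((Desc p v).ncard : ℝ) < ε * k}.ncard : ℝ) := by
  classical
  have hk' : (0 : ℝ) < k := by exact_mod_cast hk
  set r : ℝ := (1 - 5 * ε) * k with hr
  have hr0 : 0 ≤ r := by apply mul_nonneg <;> linarith
  set R : ℕ := ⌊r⌋₊ with hRdef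
  have hRr : (R : ℝ) ≤ r := Nat.floor_le hr0
  have hRk : (R : ℝ) ≤ k := by nlinarith
  let Poor : Finset V := Finset.univ.filter fun v => ((Desc p v).ncard : ℝ) < ε * k
  let Heavy : Finset V := Finset.univ.filter fun v => (1 - 4 * ε) * k < ((DescLe p v r).ncard : ℝ)
  let M : Finset V := Finset.univ.filter fun v => v ∉ Poor ∧ Desc p v ⊆ Poor
  let S2 : Finset V := Finset.univ.filter fun v => ∃ i < R, ∃ w ∈ M, parIter p i w = some v
  have eP : {v : V | ((Desc p v).ncard : ℝ) < ε * k}.ncard = Poor.card := by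
    rw [← Set.ncard_coe_finset]; congr 1; ext; simp [Poor]
  have eH : {v : V | (1 - 4 * ε) * k < ((DescLe p v r).ncard : ℝ)}.ncard = Heavy.card := by
    rw [← Set.ncard_coe_finset]; congr 1; ext; simp [Heavy]
  rw [eP, eH]
  -- bound on M
  have hM : ε * k * M.card ≤ Poor.card := by
    have h1 : ∑ v ∈ M, (Desc p v).ncard ≤ Poor.card * 1 := by
      refine sum_ncard_le M Poor (Desc p) 1 ?_ ?_
      · intro v hv
        exact (Finset.mem_filter.1 hv).2.2
      · intro x _
        rw [Set.ncard_le_one (Set.toFinite _)]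
        have aux : ∀ w ∈ M, ∀ w' ∈ M, ∀ a b : ℕ, a < b → parIter p a x = some w →
            parIter p b x = some w' → False := by
          intro w hw w' hw' a b hab ha hb
          obtain ⟨d, hd⟩ := Nat.exists_eq_add_of_lt hab
          rw [hd, Nat.add_assoc] at hb
          have h3 := parIter_split ha hb
          exact (Finset.mem_filter.1 hw).2.1
            ((Finset.mem_filter.1 hw').2.2 ⟨d + 1, Nat.succ_pos d, h3⟩)
        rintro w ⟨hw, a, _, ha⟩ w' ⟨hw', b, _, hb⟩
        rcases lt_trichotomy a b with h | h | h
        · exact (aux w hw w' hw' a b h ha hb).elim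
        · subst h
          rw [ha] at hb
          exact Option.some_injective _ hb
        · exact (aux w' hw' w hw b a h hb ha).elim
    have h2 : ∑ v ∈ M, (ε * k) ≤ ∑ v ∈ M, ((Desc p v).ncard : ℝ) := by
      apply Finset.sum_le_sum
      intro v hv
      have := (Finset.mem_filter.1 hv).2.1
      simpa [Poor] using this
    have h3 : ∑ v ∈ M, ((Desc p v).ncard : ℝ) ≤ Poor.card := by
      have : ((∑ v ∈ M, (Desc p v).ncard : ℕ) : ℝ) ≤ ((Poor.card * 1 : ℕ) : ℝ) := by
        exact_mod_cast h1
      simpa using this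
    rw [Finset.sum_const, nsmul_eq_mul] at h2
    linarith
  have hS2 : (S2.card : ℝ) ≤ R * M.card := by
    have : S2.card ≤ R * M.card := by
      have hsub : S2.image some ⊆ (Finset.range R ×ˢ M).image (fun q => parIter p q.1 q.2) := by
        intro o ho
        obtain ⟨v, hv, rfl⟩ := Finset.mem_image.1 ho
        obtain ⟨i, hi, w, hw, h⟩ := (Finset.mem_filter.1 hv).2
        exact Finset.mem_image.2 ⟨(i, w), by simp [hi, hw], h⟩
      have := (Finset.card_le_card hsub).trans Finset.card_image_le
      rw [Finset.card_image_of_injective _ (Option.some_injective V)] at this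
      simpa using this
    exact_mod_cast this
  have up : ∀ v w, w ∈ Desc p v → w ∉ Poor → v ∉ Poor := by
    intro v w hw hnp hv
    apply hnp
    have h1 := (Finset.mem_filter.1 hv).2
    have h2 : ((Desc p w).ncard : ℝ) ≤ (Desc p v).ncard := by
      exact_mod_cast Set.ncard_le_ncard (desc_subset hw) (Set.toFinite _)
    exact Finset.mem_filter.2 ⟨Finset.mem_univ _, by linarith⟩
  have tall : ∀ v, v ∉ Poor → v ∉ S2 → ∀ j ≤ R, ∃ w, w ∉ Poor ∧ parIter p j w = some v := by
    intro v hv hS j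
    induction j with
    | zero => exact fun _ => ⟨v, hv, rfl⟩
    | succ j ih =>
      intro hj
      obtain ⟨w, hw, hwv⟩ := ih (by omega)
      have hwM : w ∉ M := fun hwM =>
        hS (Finset.mem_filter.2 ⟨Finset.mem_univ _, j, by omega, w, hwM, hwv⟩)
      have : ¬ (Desc p w ⊆ Poor) := fun h =>
        hwM (Finset.mem_filter.2 ⟨Finset.mem_univ _, hw, h⟩)
      obtain ⟨x, ⟨m, hm, hx⟩, hxP⟩ := Set.not_subset.1 this
      obtain ⟨d, rfl⟩ : ∃ d, m = d + 1 := ⟨m - 1, by omega⟩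
      obtain ⟨y, hy1, hy2⟩ := parIter_mid hx
      refine ⟨y, ?_, ?_⟩
      · rcases Nat.eq_zero_or_pos d with rfl | hd
        · simp only [parIter, Option.some.injEq] at hy1
          subst hy1; exact hxP
        · exact up y x ⟨d, hd, hy1⟩ hxP
      · rw [Nat.add_comm]; exact parIter_trans hy2 hwv
  have hsum := sum_descLe p hr0
  rw [← hRdef] at hsum
  have hsum' : ∑ v, ((DescLe p v r).ncard : ℝ) ≤ Fintype.card V * R := by exact_mod_cast hsum
  let S := Poor ∪ S2
  have hpt : ∀ v ∈ (Finset.univ : Finset V), (R : ℝ) - (if v ∈ S then (R : ℝ) else 0) + (if v ∈ Heavy then ε * k else 0)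
      ≤ ((DescLe p v r).ncard : ℝ) := by
    intro v _
    have hεk : 0 < ε * k := by positivity
    have hR0 : (0 : ℝ) ≤ R := Nat.cast_nonneg _
    by_cases hH : v ∈ Heavy
    · have := (Finset.mem_filter.1 hH).2
      rw [if_pos hH]
      split_ifs <;> nlinarith
    · rw [if_neg hH]
      by_cases hS : v ∈ S
      · simp [hS]
      · rw [if_neg hS]
        have h1 : v ∉ Poor := fun h => hS (Finset.mem_union_left _ h)
        have h2 : v ∉ S2 := fun h => hS (Finset.mem_union_right _ h)
        obtain ⟨w, _, hw⟩ := tall v h1 h2 R le_rfl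
        have := descLe_large hf hRr hw
        have : (R : ℝ) ≤ (DescLe p v r).ncard := by exact_mod_cast this
        linarith
  have h5 := (Finset.sum_le_sum hpt).trans hsum'
  rw [Finset.sum_add_distrib, Finset.sum_sub_distrib] at h5
  simp only [Finset.sum_ite_mem, Finset.univ_inter, Finset.sum_const, nsmul_eq_mul,
    Finset.card_univ] at h5
  have hSc : (S.card : ℝ) ≤ Poor.card + S2.card := by exact_mod_cast Finset.card_union_le _ _
  have hSn : (0 : ℝ) ≤ S.card := Nat.cast_nonneg _
  have hMn : (0 : ℝ) ≤ M.card := Nat.cast_nonneg _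
  have h6 : ε * Heavy.card ≤ S.card := by
    have : k * (ε * Heavy.card) ≤ k * (S.card : ℝ) := by nlinarith
    exact le_of_mul_le_mul_left this hk'
  have h7 : ε * S2.card ≤ Poor.card := by
    have : (R : ℝ) * M.card ≤ k * M.card := by gcongr
    nlinarith
  rw [div_mul_eq_mul_div, le_div_iff₀ (by positivity)]
  nlinarith

/-- **First step of the proof of Lemma 6 of the paper.**  Fix `0 < ε < 1/10`.  Let `(T_k)`
be a sequence of finite rooted forests with `n_k` vertices; call `v` *poor* if
`|D(v)| < εk`, and *heavy* if `|D_{≤(1-5ε)k}(v)| > (1-4ε)k`.  If the number of poor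
vertices is `o(n_k)`, then the number of heavy vertices is `o(n_k)`. -/
theorem few_heavy_vertices (ε : ℝ) (hε0 : 0 < ε) (hε : ε < 1 / 10)
    (V : ℕ → Type) [∀ k, Fintype (V k)]
    (par : ∀ k, V k → Option (V k))
    (hforest : ∀ k, IsRootedForest (par k))
    (hpoor : Tendsto (fun k =>
        ({v : V k | ((Desc (par k) v).ncard : ℝ) < ε * k}.ncard : ℝ) / Fintype.card (V k))
      atTop (nhds 0)) :
    Tendsto (fun k =>
        ({v : V k | (1 - 4 * ε) * k <
            ((DescLe (par k) v ((1 - 5 * ε) * k)).ncard : ℝ)}.ncard : ℝ) / Fintype.card (V k))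
      atTop (nhds 0) := by
  have hb := hpoor.const_mul ((1 + ε) / ε ^ 2)
  rw [mul_zero] at hb
  refine tendsto_of_tendsto_of_tendsto_of_le_of_le' tendsto_const_nhds hb ?_ ?_
  · exact Eventually.of_forall fun k => by positivity
  · filter_upwards [eventually_gt_atTop 0] with k hk
    rw [← mul_div_assoc]
    exact div_le_div_of_nonneg_right (heavy_bound (hforest k) hε0 hε hk) (Nat.cast_nonneg _)
end

section
/- Fix a constant 0 < ε < 1/10 and a positive integer k. Let T be a finite rooted forest and let v be a vertex of T with |D_{≤(1−5ε)k}(v)| ≤ (1−4ε)k. Let N ⊆ A(v) ∪ D(v) be a set with |N| ≥ (1−ε)k, and suppose that fewer than εk vertices u ∈ N satisfy d(u,v) ≥ (1−5ε)k. Then there are at least εk vertices u ∈ N ∩ A(v) with εk ≤ d(u,v) ≤ (1−5ε)k. -/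
/-- The set `A(v)` of ancestors of `v`. -/
def Anc {V : Type*} (par : V → Option V) (v : V) : Set V :=
  {u | IsAnc par u v}

/-- **From the proof of Theorem 1 of the paper (full light vertices).**
Fix `0 < ε < 1/10` and a positive integer `k`.  Let `T` be a finite rooted forest and `v`
a vertex with `|D_{≤(1-5ε)k}(v)| ≤ (1-4ε)k` (i.e. `v` is light).  Let `N ⊆ A(v) ∪ D(v)`
with `|N| ≥ (1-ε)k`, and suppose fewer than `εk` vertices `u ∈ N` satisfy
`d(u,v) ≥ (1-5ε)k`.  Then there are at least `εk` vertices `u ∈ N ∩ A(v)` with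
`εk ≤ d(u,v) ≤ (1-5ε)k`. -/
theorem light_full_many_mid_ancestors (ε : ℝ) (hε0 : 0 < ε) (hε : ε < 1 / 10)
    (k : ℕ) (hk : 0 < k)
    (V : Type*) [Fintype V]
    (par : V → Option V) (hforest : IsRootedForest par)
    (v : V) (hlight : ((DescLe par v ((1 - 5 * ε) * k)).ncard : ℝ) ≤ (1 - 4 * ε) * k)
    (N : Set V) (hN : N ⊆ Anc par v ∪ Desc par v)
    (hNcard : (1 - ε) * k ≤ (N.ncard : ℝ))
    (hfew : (({u ∈ N | ∃ n : ℕ, (1 - 5 * ε) * k ≤ (n : ℝ) ∧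
        (parIter par n v = some u ∨ parIter par n u = some v)}).ncard : ℝ) < ε * k) :
    ε * k ≤ (({u ∈ N | ∃ n : ℕ, ε * k ≤ (n : ℝ) ∧ (n : ℝ) ≤ (1 - 5 * ε) * k ∧
        parIter par n v = some u}).ncard : ℝ) := by
  classical
  set F : Set V := {u ∈ N | ∃ n : ℕ, (1 - 5 * ε) * k ≤ (n : ℝ) ∧
        (parIter par n v = some u ∨ parIter par n u = some v)} with hF
  set M : Set V := {u ∈ N | ∃ n : ℕ, ε * k ≤ (n : ℝ) ∧ (n : ℝ) ≤ (1 - 5 * ε) * k ∧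
        parIter par n v = some u} with hM
  set S : Finset V := (Finset.Icc 1 ⌊ε * k⌋₊).image (fun n => (parIter par n v).getD v) with hS
  have hk0 : (0 : ℝ) ≤ ε * k := by positivity
  have hScard : ((S : Set V).ncard : ℝ) ≤ ε * k := by
    rw [Set.ncard_coe_finset]
    have h1 : S.card ≤ ⌊ε * k⌋₊ := by
      refine Finset.card_image_le.trans ?_
      simp
    exact le_trans (by exact_mod_cast h1) (Nat.floor_le hk0)
  have hsub : N ⊆ (F ∪ DescLe par v ((1 - 5 * ε) * k)) ∪ ((S : Set V) ∪ M) := by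
    intro u hu
    rcases hN hu with ⟨n, hn, h⟩ | ⟨n, hn, h⟩
    · rcases le_or_gt ((1 - 5 * ε) * k) (n : ℝ) with h1 | h1
      · exact Or.inl (Or.inl ⟨hu, n, h1, Or.inl h⟩)
      · rcases le_or_gt (ε * k) (n : ℝ) with h2 | h2
        · exact Or.inr (Or.inr ⟨hu, n, h2, h1.le, h⟩)
        · refine Or.inr (Or.inl ?_)
          rw [hS, Finset.mem_coe, Finset.mem_image]
          exact ⟨n, Finset.mem_Icc.2 ⟨hn, Nat.le_floor h2.le⟩, by simp [h]⟩
    · rcases le_or_gt ((1 - 5 * ε) * k) (n : ℝ) with h1 | h1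
      · exact Or.inl (Or.inl ⟨hu, n, h1, Or.inr h⟩)
      · exact Or.inl (Or.inr ⟨n, hn, h1.le, h⟩)
  have hc := Set.ncard_le_ncard hsub (Set.toFinite _)
  have h1 := Set.ncard_union_le (F ∪ DescLe par v ((1 - 5 * ε) * k)) ((S : Set V) ∪ M)
  have h2 := Set.ncard_union_le F (DescLe par v ((1 - 5 * ε) * k))
  have h3 := Set.ncard_union_le (S : Set V) M
  have h4 : N.ncard ≤ F.ncard + (DescLe par v ((1 - 5 * ε) * k)).ncard
      + ((S : Set V).ncard + M.ncard) := by omega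
  have h5 : (N.ncard : ℝ) ≤ F.ncard + (DescLe par v ((1 - 5 * ε) * k)).ncard
      + ((S : Set V).ncard + M.ncard) := by exact_mod_cast h4
  linarith
end

section
/- Let a, b, L, m be positive integers and let P be a path with vertex sequence p_0, p_1, …, p_L in a graph G. Suppose there are indices s_0 < s_1 < … < s_m and t_0, t_1, …, t_m in {0, 1, …, L} such that for each 0 ≤ i ≤ m the pair p_{s_i} p_{t_i} is an edge of G (a chord) with t_i − s_i ≥ a, and for each 0 ≤ i ≤ m−1 we have t_i − b ≤ s_{i+1} < t_i (each new chord starts at most b steps below the top of the previous one). If a > 2b, then G contains a cycle of length at least (m+1)(a − 2b). -/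
theorem chord_extend {V : Type*} (G : SimpleGraph V) (L : ℕ) (p : ℕ → V)
    (hinj : ∀ i ≤ L, ∀ j ≤ L, p i = p j → i = j)
    (hpath : ∀ j < L, G.Adj (p j) (p (j + 1))) (x y : ℕ)
    (Q : G.Walk (p y) (p x)) (hQ : Q.IsPath) (hs : ∀ v ∈ Q.support, ∃ k ≤ y, v = p k)
    (z : ℕ) (hyz : y ≤ z) (hz : z ≤ L) :
    ∃ R : G.Walk (p z) (p x), R.IsPath ∧ (∀ v ∈ R.support, ∃ k ≤ z, v = p k) ∧
      R.length = (z - y) + Q.length := by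
  induction z, hyz using Nat.le_induction with
  | base => exact ⟨Q, hQ, hs, by simp⟩
  | succ z hyz ih =>
    obtain ⟨R, hR, hRs, hl⟩ := ih (by omega)
    refine ⟨SimpleGraph.Walk.cons (hpath z (by omega)).symm R, ?_, ?_, ?_⟩
    · rw [SimpleGraph.Walk.cons_isPath_iff]
      refine ⟨hR, fun hmem => ?_⟩
      obtain ⟨k, hk, he⟩ := hRs _ hmem
      have := hinj _ hz _ (by omega) he
      omega
    · intro v hv
      rw [SimpleGraph.Walk.support_cons, List.mem_cons] at hv
      rcases hv with rfl | hv
      · exact ⟨_, le_rfl, rfl⟩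
      · obtain ⟨k, hk, he⟩ := hRs _ hv
        exact ⟨k, by omega, he⟩
    · rw [SimpleGraph.Walk.length_cons, hl]; omega

theorem chord_step {V : Type*} (G : SimpleGraph V) (L : ℕ) (p : ℕ → V)
    (hinj : ∀ i ≤ L, ∀ j ≤ L, p i = p j → i = j)
    (hpath : ∀ j < L, G.Adj (p j) (p (j + 1))) (x y t z : ℕ)
    (Q : G.Walk (p y) (p x)) (hQ : Q.IsPath) (hs : ∀ v ∈ Q.support, ∃ k ≤ y, v = p k)
    (hyt : y < t) (hc : G.Adj (p x) (p t)) (htz : t ≤ z) (hz : z ≤ L) :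
    ∃ R : G.Walk (p z) (p y), R.IsPath ∧ (∀ v ∈ R.support, ∃ k ≤ z, v = p k) ∧
      R.length = (z - t) + (Q.length + 1) := by
  have := chord_extend G L p hinj hpath y t (SimpleGraph.Walk.cons hc.symm Q.reverse) ?_ ?_ z htz hz
  · simpa using this
  · rw [SimpleGraph.Walk.cons_isPath_iff]
    refine ⟨hQ.reverse, fun hmem => ?_⟩
    rw [SimpleGraph.Walk.support_reverse, List.mem_reverse] at hmem
    obtain ⟨k, hk, he⟩ := hs _ hmem
    have := hinj _ (by omega) _ (by omega) he
    omega
  · intro v hv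
    rw [SimpleGraph.Walk.support_cons, List.mem_cons, SimpleGraph.Walk.support_reverse,
      List.mem_reverse] at hv
    rcases hv with rfl | hv
    · exact ⟨_, le_rfl, rfl⟩
    · obtain ⟨k, hk, he⟩ := hs _ hv
      exact ⟨k, by omega, he⟩

/-- **The final cycle construction in the proof of Theorem 1 of the paper.**
Let `a, b, L, m` be positive integers and let `p_0, p_1, …, p_L` be (the vertex sequence
of) a path in a graph `G`.  Suppose there are indices `s_0 < s_1 < ⋯ < s_m` and
`t_0, …, t_m` in `{0, …, L}` such that each pair `p_{s_i} p_{t_i}` is an edge of `G`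
(a chord) with `t_i - s_i ≥ a`, and for each `i < m` we have `t_i - b ≤ s_{i+1} < t_i`
(each new chord starts at most `b` steps below the top of the previous one).  If
`a > 2b`, then `G` contains a cycle of length at least `(m+1)(a - 2b)`. -/
theorem cycle_from_overlapping_chords (V : Type*) (G : SimpleGraph V)
    (a b L m : ℕ) (ha : 0 < a) (hb : 0 < b) (hL : 0 < L) (hm : 0 < m)
    (p : ℕ → V)
    (hinj : ∀ i ≤ L, ∀ j ≤ L, p i = p j → i = j)
    (hpath : ∀ j < L, G.Adj (p j) (p (j + 1)))
    (s t : ℕ → ℕ)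
    (hsL : ∀ i ≤ m, s i ≤ L) (htL : ∀ i ≤ m, t i ≤ L)
    (hmono : ∀ i < m, s i < s (i + 1))
    (hchord : ∀ i ≤ m, G.Adj (p (s i)) (p (t i)))
    (hlong : ∀ i ≤ m, s i + a ≤ t i)
    (hover : ∀ i < m, t i ≤ s (i + 1) + b ∧ s (i + 1) < t i)
    (hab : 2 * b < a) :
    ∃ (v : V) (c : G.Walk v v), c.IsCycle ∧ (m + 1) * (a - 2 * b) ≤ c.length := by
  have key : ∀ i < m, ∃ R : G.Walk (p (s (i + 1))) (p (s i)), R.IsPath ∧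
      (∀ v ∈ R.support, ∃ k ≤ s (i + 1), v = p k) ∧ (i + 1) * (a - 2 * b) ≤ R.length := by
    intro i
    induction i with
    | zero =>
      intro _
      obtain ⟨R, h1, h2, h3⟩ := chord_extend G L p hinj hpath (s 0) (s 0)
        SimpleGraph.Walk.nil (by simp) (by intro v hv; exact ⟨s 0, le_rfl, by simpa using hv⟩)
        (s (0 + 1)) (hmono 0 hm).le (hsL _ hm)
      refine ⟨R, h1, h2, ?_⟩
      have e1 := hlong 0 (by omega)
      have e2 := hover 0 hm
      simp only [SimpleGraph.Walk.length_nil] at h3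
      omega
    | succ i ih =>
      intro hi
      obtain ⟨Q, q1, q2, q3⟩ := ih (by omega)
      have e1 := hover i (by omega)
      have e2 := hover (i + 1) hi
      have e3 := hlong (i + 1) (by omega)
      obtain ⟨R, h1, h2, h3⟩ := chord_step G L p hinj hpath (s i) (s (i + 1)) (t i)
        (s (i + 1 + 1)) Q q1 q2 e1.2 (hchord i (by omega)) (by omega) (hsL _ (by omega))
      refine ⟨R, h1, h2, ?_⟩
      rw [add_mul (i + 1) 1]
      omega
  obtain ⟨n, rfl⟩ : ∃ n, m = n + 1 := ⟨m - 1, by omega⟩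
  obtain ⟨Q, q1, q2, q3⟩ := key n (by omega)
  have e1 := hover n (by omega)
  have e3 := hlong (n + 1) (by omega)
  obtain ⟨R, h1, h2, h3⟩ := chord_step G L p hinj hpath (s n) (s (n + 1)) (t n)
    (t (n + 1)) Q q1 q2 e1.2 (hchord n (by omega)) (by omega) (htL _ (by omega))
  refine ⟨_, SimpleGraph.Walk.cons (hchord (n + 1) le_rfl) R, ?_, ?_⟩
  · rw [SimpleGraph.Walk.cons_isCycle_iff]
    refine ⟨h1, fun hmem => ?_⟩
    have := h1.length_eq_one_of_mem_edges (Sym2.eq_swap ▸ hmem)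
    omega
  · rw [SimpleGraph.Walk.length_cons, add_mul (n + 1) 1]
    omega
end
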